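/- arXiv:1905.06726 — 2 statements merged into one kernel-verified Lean document; each statement's English description precedes it below -/
import Mathlib

section
/- For every sequential qubit strategy (four qubit states ρ_x, instruments with Kraus operators K_{b|y}, and measurements C_{c|z}) whose first witness satisfies W_AB = α for some α ∈ [1/2, (2+√2)/4], the second witness is bounded as W_AC ≤ (4 + √2 + √(16α − 16α² − 2))/8. -/
open Matrix ComplexOrder

noncomputable section

/-- The bit `x_y` of `x = (x₀, x₁)`. -/
def bit (x : Bool × Bool) (y : Bool) : Bool := if y then x.2 else x.1

/-- Alice–Bob witness `W_AB = (1/8) ∑_{x,y} tr[ρ_x K_{x_y|y}† K_{x_y|y}]`. -/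
def WAB (ρ : Bool × Bool → Matrix (Fin 2) (Fin 2) ℂ)
    (K : Bool → Bool → Matrix (Fin 2) (Fin 2) ℂ) : ℝ :=
  (1 / 8) * ∑ x : Bool × Bool, ∑ y : Bool,
    ((ρ x * ((K y (bit x y))ᴴ * K y (bit x y))).trace).re

/-- Alice–Charlie witness
`W_AC = (1/16) ∑_{x,y,b,z} tr[K_{b|y} ρ_x K_{b|y}† C_{x_z|z}]`. -/
def WAC (ρ : Bool × Bool → Matrix (Fin 2) (Fin 2) ℂ)
    (K C : Bool → Bool → Matrix (Fin 2) (Fin 2) ℂ) : ℝ :=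
  (1 / 16) * ∑ x : Bool × Bool, ∑ y : Bool, ∑ b : Bool, ∑ z : Bool,
    ((K y b * ρ x * (K y b)ᴴ * C z (bit x z)).trace).re

/-- A sequential qubit strategy: four qubit states, two instruments (Kraus
operators), and two binary POVMs. -/
def ValidStrategy (ρ : Bool × Bool → Matrix (Fin 2) (Fin 2) ℂ)
    (K C : Bool → Bool → Matrix (Fin 2) (Fin 2) ℂ) : Prop :=
  (∀ x, (ρ x).PosSemidef ∧ (ρ x).trace = 1) ∧
  (∀ y, (K y false)ᴴ * K y false + (K y true)ᴴ * K y true = 1) ∧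
  (∀ z b, (C z b).PosSemidef) ∧
  (∀ z, C z false + C z true = 1)

/-!
Write a Hermitian matrix as `A = (tr A • 1 + v·σ) / 2`. Let `e₀`, `e₁` be the Bloch vectors of the
signed sums `∑ₓ (-1)^{x_z} ρₓ` and `b₀`, `b₁` those of the effects `K_{0|y}† K_{0|y}`. Then
`W_AB = 1/2 + (⟪e₀, b₀⟫ + ⟪e₁, b₁⟫) / 16`, while the determinant of `K E K†` and the triangle
inequality in the plane show that Bob's instrument shrinks `e_z` at least as much as the Lüders
instrument of `b_y`: its image has length at most
`ludersNorm b_y e_z = √(‖e_z‖² (1 - ‖b_y‖²) + ⟪e_z, b_y⟫²)`. Hence `W_AC` is at most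
`1/2 + (∑_{y,z} ludersNorm b_y e_z) / 32`.

Since `e₀ ± e₁` are twice differences of Bloch vectors of states, `‖e₀ ± e₁‖ ≤ 4`. The terms `y = z`
are bounded by `‖e₀‖ + ‖e₁‖ ≤ 4√2`. In the terms `y ≠ z` one may move `b₀` along `e₁` and `b₁` along
`e₀` up to the unit sphere, which turns the two `ludersNorm`s into inner products. Sign changes
achieve `⟪e₀, e₁⟫ ≥ 0` and `⟪e₀, b₀⟫ + ⟪e₁, b₁⟫ ≥ 0`, and then this sum only increases. For vectors
`b₀`, `b₁` of norm at most one, the identity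
`⟪e₀, b₀⟫ + ⟪e₁, b₁⟫ ± (⟪e₁, b₀⟫ + ⟪e₀, b₁⟫) = ⟪e₀ ± e₁, b₀ ± b₁⟫` and the parallelogram law give
`(⟪e₀, b₀⟫ + ⟪e₁, b₁⟫)² + (⟪e₁, b₀⟫ + ⟪e₀, b₁⟫)² ≤ 32`.
-/

open scoped RealInnerProductSpace

section LudersNorm

variable {V : Type*} [NormedAddCommGroup V] [InnerProductSpace ℝ V]

/-- The length of the vector obtained from `e` by keeping its component along `b` and multiplying
its component orthogonal to `b` by `√(1 - ‖b‖²)`. On Bloch vectors this is the action of the Lüders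
instrument of the unbiased measurement with effects `(1 ± b·σ)/2`. Meant for `‖b‖ ≤ 1`; beyond that
the argument of the outer root may be negative, and the root is then `0`. -/
def ludersNorm (b e : V) : ℝ := √(‖e‖ ^ 2 * (1 - ‖b‖ ^ 2) + ⟪e, b⟫ ^ 2)

lemma ludersNorm_neg_left (b e : V) : ludersNorm (-b) e = ludersNorm b e := by
  simp [ludersNorm]

lemma ludersNorm_neg_right (b e : V) : ludersNorm b (-e) = ludersNorm b e := by
  simp [ludersNorm]

lemma sq_real_inner_le (x y : V) : ⟪x, y⟫ ^ 2 ≤ ‖x‖ ^ 2 * ‖y‖ ^ 2 := by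
  rw [← mul_pow, ← sq_abs]
  exact pow_le_pow_left₀ (abs_nonneg _) (abs_real_inner_le_norm x y) 2

lemma ludersNorm_le_norm (b e : V) : ludersNorm b e ≤ ‖e‖ :=
  Real.sqrt_le_iff.2 ⟨norm_nonneg e, by linarith [sq_real_inner_le e b]⟩

lemma sq_ludersNorm {b : V} (hb : ‖b‖ ≤ 1) (e : V) :
    ludersNorm b e ^ 2 = ‖e‖ ^ 2 * (1 - ‖b‖ ^ 2) + ⟪e, b⟫ ^ 2 := by
  have hb_sq : 0 ≤ 1 - ‖b‖ ^ 2 := sub_nonneg.2 (pow_le_one₀ (norm_nonneg b) hb)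
  exact Real.sq_sqrt (by positivity)

lemma real_inner_le_ludersNorm {b : V} (hb : ‖b‖ ≤ 1) (e : V) : ⟪e, b⟫ ≤ ludersNorm b e := by
  have hb_sq : 0 ≤ 1 - ‖b‖ ^ 2 := sub_nonneg.2 (pow_le_one₀ (norm_nonneg b) hb)
  exact Real.le_sqrt_of_sq_le (le_add_of_nonneg_left (by positivity))

-- The unit sphere is reached from `b` along the ray in direction `f` exactly when the inner product
-- with `f` has grown to `ludersNorm b f`.
lemma exists_inner_add_smul_eq_ludersNorm {b : V} (hb : ‖b‖ ≤ 1) (f : V) :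
    ∃ t : ℝ, 0 ≤ t ∧ ‖b + t • f‖ ≤ 1 ∧ ⟪f, b + t • f⟫ = ludersNorm b f := by
  rcases eq_or_ne f 0 with rfl | hf
  · exact ⟨0, le_rfl, by simpa using hb, by simp [ludersNorm]⟩
  have hf_sq : 0 < ‖f‖ ^ 2 := by positivity
  set t := (ludersNorm b f - ⟪f, b⟫) / ‖f‖ ^ 2
  have ht : t * ‖f‖ ^ 2 = ludersNorm b f - ⟪f, b⟫ := div_mul_cancel₀ _ hf_sq.ne'
  have norm_sq_eq : ‖b + t • f‖ ^ 2 = 1 := by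
    refine mul_right_cancel₀ hf_sq.ne' ?_
    rw [norm_add_sq_real, real_inner_smul_right, norm_smul, mul_pow, Real.norm_eq_abs, sq_abs,
      real_inner_comm]
    linear_combination (2 * ⟪f, b⟫ + t * ‖f‖ ^ 2 + (ludersNorm b f - ⟪f, b⟫)) * ht
      + sq_ludersNorm hb f
  refine ⟨t, div_nonneg (sub_nonneg.2 (real_inner_le_ludersNorm hb f)) hf_sq.le, ?_, ?_⟩
  · exact (sq_le_one_iff₀ (norm_nonneg _)).1 norm_sq_eq.le
  · rw [inner_add_right, real_inner_smul_right, real_inner_self_eq_norm_sq, ht]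
    ring

lemma sq_inner_add_sq_inner_swap_le {e₀ e₁ b₀ b₁ : V} {r : ℝ} (h_add : ‖e₀ + e₁‖ ≤ r)
    (h_sub : ‖e₀ - e₁‖ ≤ r) (hb₀ : ‖b₀‖ ≤ 1) (hb₁ : ‖b₁‖ ≤ 1) :
    (⟪e₀, b₀⟫ + ⟪e₁, b₁⟫) ^ 2 + (⟪e₁, b₀⟫ + ⟪e₀, b₁⟫) ^ 2 ≤ 2 * r ^ 2 := by
  have h_add_sq : ‖e₀ + e₁‖ ^ 2 ≤ r ^ 2 := pow_le_pow_left₀ (norm_nonneg _) h_add 2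
  have h_sub_sq : ‖e₀ - e₁‖ ^ 2 ≤ r ^ 2 := pow_le_pow_left₀ (norm_nonneg _) h_sub 2
  have hb₀_sq : ‖b₀‖ ^ 2 ≤ 1 := pow_le_one₀ (norm_nonneg _) hb₀
  have hb₁_sq : ‖b₁‖ ^ 2 ≤ 1 := pow_le_one₀ (norm_nonneg _) hb₁
  calc (⟪e₀, b₀⟫ + ⟪e₁, b₁⟫) ^ 2 + (⟪e₁, b₀⟫ + ⟪e₀, b₁⟫) ^ 2
      = (⟪e₀ + e₁, b₀ + b₁⟫ ^ 2 + ⟪e₀ - e₁, b₀ - b₁⟫ ^ 2) / 2 := by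
        simp only [inner_add_left, inner_add_right, inner_sub_left, inner_sub_right]
        ring
    _ ≤ (r ^ 2 * ‖b₀ + b₁‖ ^ 2 + r ^ 2 * ‖b₀ - b₁‖ ^ 2) / 2 := by
        gcongr
        · exact (sq_real_inner_le _ _).trans (by gcongr)
        · exact (sq_real_inner_le _ _).trans (by gcongr)
    _ = r ^ 2 * (‖b₀‖ ^ 2 + ‖b₁‖ ^ 2) := by
        linear_combination r ^ 2 / 2 * parallelogram_law_with_norm ℝ b₀ b₁
    _ ≤ r ^ 2 * (1 + 1) := by gcongr
    _ = 2 * r ^ 2 := by ring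

lemma sq_inner_add_sq_ludersNorm_swap_le {e₀ e₁ b₀ b₁ : V} {r : ℝ} (h_add : ‖e₀ + e₁‖ ≤ r)
    (h_sub : ‖e₀ - e₁‖ ≤ r) (hb₀ : ‖b₀‖ ≤ 1) (hb₁ : ‖b₁‖ ≤ 1) :
    (⟪e₀, b₀⟫ + ⟪e₁, b₁⟫) ^ 2 + (ludersNorm b₀ e₁ + ludersNorm b₁ e₀) ^ 2 ≤ 2 * r ^ 2 := by
  wlog h_corr : 0 ≤ ⟪e₀, b₀⟫ + ⟪e₁, b₁⟫ generalizing b₀ b₁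
  · have := this (b₀ := -b₀) (b₁ := -b₁) (by rwa [norm_neg]) (by rwa [norm_neg])
      (by simp only [inner_neg_right]; linarith)
    simp only [ludersNorm_neg_left, inner_neg_right] at this
    linarith
  wlog h_inner : 0 ≤ ⟪e₀, e₁⟫ generalizing e₁ b₁
  · have := this (e₁ := -e₁) (b₁ := -b₁) (by rwa [← sub_eq_add_neg]) (by rwa [sub_neg_eq_add])
      (by rwa [norm_neg]) (by rwa [inner_neg_neg]) (by rw [inner_neg_right]; linarith)
    simpa only [ludersNorm_neg_left, ludersNorm_neg_right, inner_neg_neg] using this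
  obtain ⟨t₀, ht₀, h_norm₀, h_inner₀⟩ := exists_inner_add_smul_eq_ludersNorm hb₀ e₁
  obtain ⟨t₁, ht₁, h_norm₁, h_inner₁⟩ := exists_inner_add_smul_eq_ludersNorm hb₁ e₀
  have h_le : ⟪e₀, b₀⟫ + ⟪e₁, b₁⟫ ≤ ⟪e₀, b₀ + t₀ • e₁⟫ + ⟪e₁, b₁ + t₁ • e₀⟫ := by
    simp only [inner_add_right, real_inner_smul_right, real_inner_comm e₀ e₁]
    linarith [mul_nonneg ht₀ h_inner, mul_nonneg ht₁ h_inner]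
  rw [← h_inner₀, ← h_inner₁]
  exact (add_le_add_left (pow_le_pow_left₀ h_corr h_le 2) _).trans
    (sq_inner_add_sq_inner_swap_le h_add h_sub h_norm₀ h_norm₁)

lemma norm_add_norm_le_sqrt_two_mul {e₀ e₁ : V} {r : ℝ} (h_add : ‖e₀ + e₁‖ ≤ r)
    (h_sub : ‖e₀ - e₁‖ ≤ r) : ‖e₀‖ + ‖e₁‖ ≤ √2 * r := by
  have hr : 0 ≤ r := (norm_nonneg _).trans h_add
  have h_add_sq : ‖e₀ + e₁‖ ^ 2 ≤ r ^ 2 := pow_le_pow_left₀ (norm_nonneg _) h_add 2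
  have h_sub_sq : ‖e₀ - e₁‖ ^ 2 ≤ r ^ 2 := pow_le_pow_left₀ (norm_nonneg _) h_sub 2
  refine le_of_sq_le_sq ?_ (by positivity)
  rw [mul_pow, Real.sq_sqrt zero_le_two]
  linarith [parallelogram_law_with_norm ℝ e₀ e₁, add_sq_le (a := ‖e₀‖) (b := ‖e₁‖)]

lemma sum_ludersNorm_le {e₀ e₁ b₀ b₁ : V} {r : ℝ} (h_add : ‖e₀ + e₁‖ ≤ r)
    (h_sub : ‖e₀ - e₁‖ ≤ r) (hb₀ : ‖b₀‖ ≤ 1) (hb₁ : ‖b₁‖ ≤ 1) :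
    ludersNorm b₀ e₀ + ludersNorm b₀ e₁ + ludersNorm b₁ e₀ + ludersNorm b₁ e₁
      ≤ √2 * r + √(2 * r ^ 2 - (⟪e₀, b₀⟫ + ⟪e₁, b₁⟫) ^ 2) := by
  have h_diag : ludersNorm b₀ e₀ + ludersNorm b₁ e₁ ≤ √2 * r :=
    (add_le_add (ludersNorm_le_norm b₀ e₀) (ludersNorm_le_norm b₁ e₁)).trans
      (norm_add_norm_le_sqrt_two_mul h_add h_sub)
  have h_swap : ludersNorm b₀ e₁ + ludersNorm b₁ e₀
      ≤ √(2 * r ^ 2 - (⟪e₀, b₀⟫ + ⟪e₁, b₁⟫) ^ 2) :=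
    Real.le_sqrt_of_sq_le
      (le_sub_iff_add_le'.2 (sq_inner_add_sq_ludersNorm_swap_le h_add h_sub hb₀ hb₁))
  linarith

end LudersNorm

section BlochVector

variable {A B E K : Matrix (Fin 2) (Fin 2) ℂ}

/-- The vector `v` in the expansion `A = (tr A • 1 + v·σ) / 2` of a Hermitian matrix over the Pauli
matrices. It is read off from the diagonal and the entry `A 0 1`, so the expansion fails for
matrices that are not Hermitian. -/
def blochVector : Matrix (Fin 2) (Fin 2) ℂ →ₗ[ℝ] EuclideanSpace ℝ (Fin 3) where
  toFun A := !₂[2 * (A 0 1).re, -2 * (A 0 1).im, (A 0 0).re - (A 1 1).re]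
  map_add' A B := by ext i; fin_cases i <;> simp <;> ring
  map_smul' c A := by ext i; fin_cases i <;> simp <;> ring

lemma blochVector_one : blochVector 1 = 0 := by
  ext i; fin_cases i <;> simp [blochVector]

lemma eq_fin_two_of_isHermitian (hA : A.IsHermitian) :
    A = !![((A 0 0).re : ℂ), A 0 1; star (A 0 1), ((A 1 1).re : ℂ)] := by
  ext i j
  fin_cases i <;> fin_cases j
  · exact (hA.coe_re_apply_self 0).symm
  · rfl
  · exact (hA.apply 1 0).symm
  · exact (hA.coe_re_apply_self 1).symm

lemma trace_mul_eq_blochVector (hA : A.IsHermitian) (hB : B.IsHermitian) :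
    (A * B).trace.re = (A.trace.re * B.trace.re + ⟪blochVector A, blochVector B⟫) / 2 := by
  rw [eq_fin_two_of_isHermitian hA, eq_fin_two_of_isHermitian hB]
  simp [blochVector, trace_fin_two, PiLp.inner_apply, Fin.sum_univ_three]
  ring

lemma det_eq_blochVector (hA : A.IsHermitian) :
    A.det = ((A.trace.re ^ 2 - ‖blochVector A‖ ^ 2) / 4 : ℝ) := by
  rw [eq_fin_two_of_isHermitian hA]
  apply Complex.ext <;> simp only [Complex.ofReal_re, Complex.ofReal_im] <;>
    simp [blochVector, trace_fin_two, det_fin_two, EuclideanSpace.norm_sq_eq,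
      Fin.sum_univ_three] <;>
    ring

lemma norm_blochVector_le_trace (hA : A.PosSemidef) : ‖blochVector A‖ ≤ A.trace.re := by
  have h_det := hA.det_nonneg
  rw [det_eq_blochVector hA.isHermitian, Complex.zero_le_real] at h_det
  exact le_of_sq_le_sq (by linarith) (Complex.nonneg_iff.1 hA.trace_nonneg).1

lemma blochVector_eq_neg_of_add_eq_one (h : A + B = 1) : blochVector B = -blochVector A := by
  rw [eq_neg_iff_add_eq_zero, ← map_add, add_comm, h, blochVector_one]

lemma trace_re_add_of_add_eq_one (h : A + B = 1) : A.trace.re + B.trace.re = 2 := by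
  rw [← Complex.add_re, ← trace_add, h]
  simp

lemma norm_blochVector_le_one (hA : A.PosSemidef) (hB : B.PosSemidef) (h : A + B = 1) :
    ‖blochVector A‖ ≤ 1 := by
  have hB_norm := norm_blochVector_le_trace hB
  rw [blochVector_eq_neg_of_add_eq_one h, norm_neg] at hB_norm
  linarith [norm_blochVector_le_trace hA, trace_re_add_of_add_eq_one h]

-- This is `det (K E Kᴴ) = det E * det (Kᴴ K)` in Bloch coordinates.
lemma four_mul_sq_norm_blochVector_conj (hE : E.IsHermitian) (hE_trace : E.trace = 0) :
    4 * ‖blochVector (K * E * Kᴴ)‖ ^ 2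
      = ‖blochVector E‖ ^ 2 * ((Kᴴ * K).trace.re ^ 2 - ‖blochVector (Kᴴ * K)‖ ^ 2)
        + ⟪blochVector E, blochVector (Kᴴ * K)⟫ ^ 2 := by
  have hK := isHermitian_conjTranspose_mul_self K
  have h_trace : (K * E * Kᴴ).trace.re = ⟪blochVector E, blochVector (Kᴴ * K)⟫ / 2 := by
    rw [trace_mul_cycle, trace_mul_comm, trace_mul_eq_blochVector hE hK, hE_trace]
    simp
  have h_det : (K * E * Kᴴ).det = E.det * (Kᴴ * K).det := by
    simp only [det_mul]
    ring
  rw [det_eq_blochVector (isHermitian_mul_mul_conjTranspose K hE), det_eq_blochVector hE,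
    det_eq_blochVector hK, h_trace, hE_trace, ← Complex.ofReal_mul, Complex.ofReal_inj] at h_det
  simp only [Complex.zero_re] at h_det
  linear_combination -16 * h_det

lemma sq_add_add_sq_add_le {a b x y c d : ℝ} (ha : 0 ≤ a) (hb : 0 ≤ b)
    (hxc : x ^ 2 + c ^ 2 = a ^ 2) (hyd : y ^ 2 + d ^ 2 = b ^ 2) :
    (x + y) ^ 2 + (c + d) ^ 2 ≤ (a + b) ^ 2 := by
  have h_cauchy : x * y + c * d ≤ a * b := by
    refine le_of_sq_le_sq ?_ (mul_nonneg ha hb)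
    rw [mul_pow, ← hxc, ← hyd]
    linarith [sq_nonneg (x * d - c * y)]
  linarith

end BlochVector

section KrausChannel

variable {n : Type*} [Fintype n] {K : Bool → Matrix n n ℂ} {A : Matrix n n ℂ}

/-- The channel `A ↦ K₀ A K₀† + K₁ A K₁†` that remains of an instrument with one Kraus operator per
outcome when the outcome is discarded. -/
def krausChannel (K : Bool → Matrix n n ℂ) : Matrix n n ℂ →ₗ[ℂ] Matrix n n ℂ where
  toFun A := K false * A * (K false)ᴴ + K true * A * (K true)ᴴ
  map_add' A B := by simp only [mul_add, add_mul]; abel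
  map_smul' c A := by simp

lemma krausChannel_apply (K : Bool → Matrix n n ℂ) (A : Matrix n n ℂ) :
    krausChannel K A = K false * A * (K false)ᴴ + K true * A * (K true)ᴴ := rfl

lemma isHermitian_krausChannel (hA : A.IsHermitian) : (krausChannel K A).IsHermitian :=
  (isHermitian_mul_mul_conjTranspose _ hA).add (isHermitian_mul_mul_conjTranspose _ hA)

lemma trace_krausChannel [DecidableEq n]
    (hK : (K false)ᴴ * K false + (K true)ᴴ * K true = 1) :
    (krausChannel K A).trace = A.trace := by
  rw [krausChannel_apply, trace_add, trace_mul_cycle, trace_mul_cycle (K true), ← trace_add,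
    ← add_mul, hK, one_mul]

end KrausChannel

section QubitChannel

variable {K : Bool → Matrix (Fin 2) (Fin 2) ℂ} {C E : Matrix (Fin 2) (Fin 2) ℂ}

lemma norm_blochVector_krausChannel_le (hE : E.IsHermitian) (hE_trace : E.trace = 0)
    (hK : (K false)ᴴ * K false + (K true)ᴴ * K true = 1) :
    ‖blochVector (krausChannel K E)‖
      ≤ ludersNorm (blochVector ((K false)ᴴ * K false)) (blochVector E) := by
  have h₀ := four_mul_sq_norm_blochVector_conj (K := K false) hE hE_trace
  have h₁ := four_mul_sq_norm_blochVector_conj (K := K true) hE hE_trace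
  rw [blochVector_eq_neg_of_add_eq_one hK, inner_neg_right, norm_neg, neg_sq] at h₁
  have trace_nonneg (b : Bool) : 0 ≤ ((K b)ᴴ * K b).trace.re := (norm_nonneg _).trans
    (norm_blochVector_le_trace (posSemidef_conjTranspose_mul_self (K b)))
  have h_traces := trace_re_add_of_add_eq_one hK
  rw [krausChannel_apply, map_add]
  refine (norm_add_le _ _).trans (Real.le_sqrt_of_sq_le ?_)
  set e := blochVector E
  set n := blochVector ((K false)ᴴ * K false)
  have h_area := Real.sq_sqrt (sub_nonneg.2 (sq_real_inner_le e n))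
  set area := √(‖e‖ ^ 2 * ‖n‖ ^ 2 - ⟪e, n⟫ ^ 2)
  have h_triangle := sq_add_add_sq_add_le
    (mul_nonneg (norm_nonneg e) (trace_nonneg false))
    (mul_nonneg (norm_nonneg e) (trace_nonneg true))
    (x := 2 * ‖blochVector (K false * E * (K false)ᴴ)‖)
    (y := 2 * ‖blochVector (K true * E * (K true)ᴴ)‖)
    (c := area) (d := area) (by linarith) (by linarith)
  rw [← mul_add, ← mul_add, h_traces] at h_triangle
  linarith

lemma trace_krausChannel_mul_le (hE : E.IsHermitian) (hE_trace : E.trace = 0)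
    (hK : (K false)ᴴ * K false + (K true)ᴴ * K true = 1)
    (hC : C.IsHermitian) (hC_norm : ‖blochVector C‖ ≤ 1) :
    (krausChannel K E * C).trace.re
      ≤ ludersNorm (blochVector ((K false)ᴴ * K false)) (blochVector E) / 2 := by
  rw [trace_mul_eq_blochVector (isHermitian_krausChannel hE) hC, trace_krausChannel hK, hE_trace,
    Complex.zero_re, zero_mul, zero_add]
  gcongr
  calc ⟪blochVector (krausChannel K E), blochVector C⟫
      ≤ ‖blochVector (krausChannel K E)‖ * ‖blochVector C‖ := real_inner_le_norm _ _
    _ ≤ ‖blochVector (krausChannel K E)‖ := mul_le_of_le_one_right (norm_nonneg _) hC_norm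
    _ ≤ _ := norm_blochVector_krausChannel_le hE hE_trace hK

end QubitChannel

section BitContrast

/-- The signed sum `∑ₓ (-1)^{x_z} ρ_x`, which carries everything that the encoding `ρ` reveals about
the bit `x_z` of a uniformly random `x`. -/
def bitContrast {M : Type*} [AddCommGroup M] (ρ : Bool × Bool → M) (z : Bool) : M :=
  ∑ x, if bit x z then -ρ x else ρ x

lemma map_bitContrast {M N F : Type*} [AddCommGroup M] [AddCommGroup N] [FunLike F M N]
    [AddMonoidHomClass F M N] (f : F) (ρ : Bool × Bool → M) (z : Bool) :
    f (bitContrast ρ z) = bitContrast (fun x => f (ρ x)) z := by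
  simp only [bitContrast, map_sum, apply_ite f, map_neg]

lemma bitContrast_false_add_true {M : Type*} [AddCommGroup M] (ρ : Bool × Bool → M) :
    bitContrast ρ false + bitContrast ρ true = 2 • (ρ (false, false) - ρ (true, true)) := by
  simp only [bitContrast, bit, Fintype.sum_prod_type, Fintype.sum_bool, Bool.false_eq_true,
    ↓reduceIte]
  abel

lemma bitContrast_false_sub_true {M : Type*} [AddCommGroup M] (ρ : Bool × Bool → M) :
    bitContrast ρ false - bitContrast ρ true = 2 • (ρ (false, true) - ρ (true, false)) := by
  simp only [bitContrast, bit, Fintype.sum_prod_type, Fintype.sum_bool, Bool.false_eq_true,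
    ↓reduceIte]
  abel

lemma norm_two_nsmul_sub_le {V : Type*} [SeminormedAddCommGroup V] {v w : V} (hv : ‖v‖ ≤ 1)
    (hw : ‖w‖ ≤ 1) : ‖2 • (v - w)‖ ≤ 4 := by
  calc ‖2 • (v - w)‖ ≤ 2 * ‖v - w‖ := by simpa using norm_nsmul_le (n := 2) (a := v - w)
    _ ≤ 2 * (‖v‖ + ‖w‖) := by gcongr; exact norm_sub_le v w
    _ ≤ 4 := by linarith

lemma norm_bitContrast_false_add_true_le {V : Type*} [SeminormedAddCommGroup V]
    {v : Bool × Bool → V} (hv : ∀ x, ‖v x‖ ≤ 1) :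
    ‖bitContrast v false + bitContrast v true‖ ≤ 4 := by
  rw [bitContrast_false_add_true]
  exact norm_two_nsmul_sub_le (hv _) (hv _)

lemma norm_bitContrast_false_sub_true_le {V : Type*} [SeminormedAddCommGroup V]
    {v : Bool × Bool → V} (hv : ∀ x, ‖v x‖ ≤ 1) :
    ‖bitContrast v false - bitContrast v true‖ ≤ 4 := by
  rw [bitContrast_false_sub_true]
  exact norm_two_nsmul_sub_le (hv _) (hv _)

variable {n : Type*} {ρ : Bool × Bool → Matrix n n ℂ}

lemma isHermitian_bitContrast (hρ : ∀ x, (ρ x).IsHermitian) (z : Bool) :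
    (bitContrast ρ z).IsHermitian := by
  refine isSelfAdjoint_sum _ fun x _ => ?_
  split_ifs
  exacts [(hρ x).neg, hρ x]

lemma trace_bitContrast_eq_zero [Fintype n] (hρ : ∀ x, (ρ x).trace = 1) (z : Bool) :
    (bitContrast ρ z).trace = 0 := by
  cases z <;> simp [bitContrast, bit, Fintype.sum_prod_type, hρ]

lemma sum_trace_mul_bit_eq [Fintype n] [DecidableEq n] {F : Bool → Matrix n n ℂ}
    (hρ : ∀ x, (ρ x).trace = 1) (hF : F false + F true = 1) (z : Bool) :
    ∑ x, (ρ x * F (bit x z)).trace.re = 2 + (bitContrast ρ z * F false).trace.re := by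
  have hF_true : F true = 1 - F false := eq_sub_of_add_eq' hF
  cases z <;>
    simp only [bitContrast, bit, Fintype.sum_prod_type, Fintype.sum_bool, Bool.false_eq_true,
      ↓reduceIte, hF_true, mul_sub, mul_one, add_mul, neg_mul, trace_add, trace_sub, trace_neg,
      hρ, Complex.add_re, Complex.sub_re, Complex.neg_re, Complex.one_re] <;>
    ring

end BitContrast

section Witnesses

variable {ρ : Bool × Bool → Matrix (Fin 2) (Fin 2) ℂ}
  {K C : Bool → Bool → Matrix (Fin 2) (Fin 2) ℂ}

lemma inner_blochVector_add_eq_WAB (hρ : ∀ x, (ρ x).IsHermitian)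
    (hρ_trace : ∀ x, (ρ x).trace = 1)
    (hK : ∀ y, (K y false)ᴴ * K y false + (K y true)ᴴ * K y true = 1) :
    ⟪blochVector (bitContrast ρ false), blochVector ((K false false)ᴴ * K false false)⟫
      + ⟪blochVector (bitContrast ρ true), blochVector ((K true false)ᴴ * K true false)⟫
      = 16 * WAB ρ K - 8 := by
  have h_bit (y : Bool) : ∑ x, (ρ x * ((K y (bit x y))ᴴ * K y (bit x y))).trace.re
      = 2 + ⟪blochVector (bitContrast ρ y), blochVector ((K y false)ᴴ * K y false)⟫ / 2 := by
    rw [sum_trace_mul_bit_eq (F := fun b => (K y b)ᴴ * K y b) hρ_trace (hK y),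
      trace_mul_eq_blochVector (isHermitian_bitContrast hρ y)
        (isHermitian_conjTranspose_mul_self _),
      trace_bitContrast_eq_zero hρ_trace, Complex.zero_re, zero_mul, zero_add]
  rw [WAB, Finset.sum_comm]
  simp only [h_bit, Fintype.sum_bool]
  ring

lemma WAC_eq_sum_trace_krausChannel_mul (ρ : Bool × Bool → Matrix (Fin 2) (Fin 2) ℂ)
    (K C : Bool → Bool → Matrix (Fin 2) (Fin 2) ℂ) :
    WAC ρ K C = (∑ y, ∑ z, ∑ x, (krausChannel (K y) (ρ x) * C z (bit x z)).trace.re) / 16 := by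
  simp only [WAC, krausChannel_apply, Fintype.sum_bool, Finset.sum_add_distrib, add_mul, trace_add,
    Complex.add_re]
  ring

lemma WAC_le_sum_ludersNorm (h : ValidStrategy ρ K C) :
    WAC ρ K C ≤ 1 / 2 + (∑ y, ∑ z, ludersNorm (blochVector ((K y false)ᴴ * K y false))
      (blochVector (bitContrast ρ z))) / 32 := by
  obtain ⟨hρ, hK, hC, hC_sum⟩ := h
  have h_bit (y z : Bool) : ∑ x, (krausChannel (K y) (ρ x) * C z (bit x z)).trace.re
      ≤ 2 + ludersNorm (blochVector ((K y false)ᴴ * K y false))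
        (blochVector (bitContrast ρ z)) / 2 := by
    rw [sum_trace_mul_bit_eq (ρ := fun x => krausChannel (K y) (ρ x))
      (fun x => (trace_krausChannel (hK y)).trans (hρ x).2) (hC_sum z), ← map_bitContrast]
    gcongr
    exact trace_krausChannel_mul_le (isHermitian_bitContrast (fun x => (hρ x).1.isHermitian) z)
      (trace_bitContrast_eq_zero (fun x => (hρ x).2) z) (hK y) (hC z false).isHermitian
      (norm_blochVector_le_one (hC z false) (hC z true) (hC_sum z))
  rw [WAC_eq_sum_trace_krausChannel_mul]
  simp only [Fintype.sum_bool]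
  linarith [h_bit false false, h_bit false true, h_bit true false, h_bit true true]

end Witnesses

theorem sequential_qrac_tradeoff_upper_bound_general
    {ρ : Bool × Bool → Matrix (Fin 2) (Fin 2) ℂ}
    {K C : Bool → Bool → Matrix (Fin 2) (Fin 2) ℂ} (hvalid : ValidStrategy ρ K C) :
    WAC ρ K C ≤ (4 + √2 + √(16 * WAB ρ K - 16 * WAB ρ K ^ 2 - 2)) / 8 := by
  have hWAC := WAC_le_sum_ludersNorm hvalid
  obtain ⟨hρ, hK, -, -⟩ := hvalid
  have hWAB := inner_blochVector_add_eq_WAB (fun x => (hρ x).1.isHermitian) (fun x => (hρ x).2) hK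
  have h_state (x) : ‖blochVector (ρ x)‖ ≤ 1 := by
    simpa [(hρ x).2] using norm_blochVector_le_trace (hρ x).1
  have h_effect (y) : ‖blochVector ((K y false)ᴴ * K y false)‖ ≤ 1 :=
    norm_blochVector_le_one (posSemidef_conjTranspose_mul_self _)
      (posSemidef_conjTranspose_mul_self _) (hK y)
  simp only [map_bitContrast, Fintype.sum_bool] at hWAC hWAB
  have h_sum := sum_ludersNorm_le (norm_bitContrast_false_add_true_le h_state)
    (norm_bitContrast_false_sub_true_le h_state) (h_effect false) (h_effect true)
  have h_radicand : 2 * 4 ^ 2 - (16 * WAB ρ K - 8) ^ 2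
      = 4 ^ 2 * (16 * WAB ρ K - 16 * WAB ρ K ^ 2 - 2) := by ring
  rw [hWAB, h_radicand, Real.sqrt_mul (by positivity), Real.sqrt_sq zero_le_four] at h_sum
  linarith

/-- Result 1 (upper bound): for any sequential qubit strategy with
`W_AB = α`, one has `W_AC ≤ (4 + √2 + √(16α − 16α² − 2))/8`. -/
theorem sequential_qrac_tradeoff_upper_bound
    (ρ : Bool × Bool → Matrix (Fin 2) (Fin 2) ℂ)
    (K C : Bool → Bool → Matrix (Fin 2) (Fin 2) ℂ)
    (hvalid : ValidStrategy ρ K C)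
    (α : ℝ) (hα : α ∈ Set.Icc (1 / 2 : ℝ) ((2 + Real.sqrt 2) / 4))
    (hAB : WAB ρ K = α) :
    WAC ρ K C ≤ (4 + Real.sqrt 2 + Real.sqrt (16 * α - 16 * α ^ 2 - 2)) / 8 := by
  subst hAB
  exact sequential_qrac_tradeoff_upper_bound_general hvalid

end
end

section
/- Let a sequential qubit strategy achieve the optimal witness pair W_AB = α and W_AC = (4 + √2 + √(16α − 16α² − 2))/8 for some α ∈ [1/2, (2+√2)/4]. Then each of Alice's four states is pure, i.e. each ρ_x is a rank-one projection (ρ_x² = ρ_x and tr ρ_x = 1). -/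
open Matrix ComplexOrder

noncomputable section

/-!
In Bloch vectors, `W_AB` and `W_AC` are affine in `Y = ∑ ⟪b_y, r_y⟫` and `X = ∑ ⟪a_{yz}, r_z⟫`. Here
`r₀ = u + v` and `r₁ = u - v`, where `u` and `v` are the differences of the Bloch vectors of the
antipodal pairs `ρ₀₀, ρ₁₁` and `ρ₀₁, ρ₁₀`, so `‖u‖, ‖v‖ ≤ 1`, and equality forces the four states to
be pure. Bob's measurement with Bloch vector `b` shrinks `r` to length at most
`√((1 - ‖b‖²) ‖r‖² + ⟪b, r⟫²)`, which bounds Charlie's `⟪a_{yz}, r⟫`.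

The witness pair is optimal when `X = √8 + √(8 - Y²)`, and then some `c X + s Y` with `c² + s² = 1`
and `c ≥ 0` takes the value `√8 (1 + c)`. For unit `u, v` the vectors `r₀, r₁` are orthogonal, and
Bessel's inequality shows that this value cannot be exceeded. Since `c X + s Y = ⟪F, u⟫ + ⟪G, v⟫` is
linear, it is attained in the product of unit balls only at unit `u` and `v`, unless `F` or `G`
vanishes; in that case it would also be attained at some `u = v`, where the bound is strict.
-/

section ScalarInequalities

lemma add_le_sqrt_of_sq_eq_sub {x₀ x₁ p₀ p₁ q : ℝ} (hp₀ : 0 ≤ p₀) (hp₁ : 0 ≤ p₁) (hq : 0 ≤ q)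
    (h₀ : x₀ ^ 2 = p₀ ^ 2 - q) (h₁ : x₁ ^ 2 = p₁ ^ 2 - q) :
    x₀ + x₁ ≤ √((p₀ + p₁) ^ 2 - 4 * q) := by
  have cauchy_schwarz : x₀ * x₁ + q ≤ p₀ * p₁ := by
    refine le_of_sq_le_sq ?_ (mul_nonneg hp₀ hp₁)
    calc (x₀ * x₁ + q) ^ 2 ≤ (x₀ ^ 2 + q) * (x₁ ^ 2 + q) := by
          linarith [mul_nonneg hq (sq_nonneg (x₀ - x₁))]
      _ = (p₀ * p₁) ^ 2 := by rw [h₀, h₁]; ring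
  exact Real.le_sqrt_of_sq_le (by linarith)

lemma add_le_sqrt_two_mul_add_sq (x y : ℝ) : x + y ≤ √(2 * (x ^ 2 + y ^ 2)) :=
  Real.le_sqrt_of_sq_le add_sq_le

lemma two_mul_mul_mul_le_of_sq_le_mul {A B t : ℝ} (hA : 0 ≤ A) (hB : 0 ≤ B) (ht : t ^ 2 ≤ A * B)
    (c s : ℝ) : 2 * (c * s * t) ≤ c ^ 2 * A + s ^ 2 * B := by
  refine le_of_sq_le_sq ?_ (by positivity)
  calc (2 * (c * s * t)) ^ 2 = 4 * (c * s) ^ 2 * t ^ 2 := by ring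
    _ ≤ 4 * (c * s) ^ 2 * (A * B) := by gcongr
    _ ≤ (c ^ 2 * A + s ^ 2 * B) ^ 2 := by linarith [sq_nonneg (c ^ 2 * A - s ^ 2 * B)]

-- The hypothesis `h` says that `(X / Q, P / R)` lies in the unit disc; cleared of denominators, it
-- is `(X P)² ≤ (Q² - X²) (R² - P²)`.
lemma mul_add_mul_le_sqrt {X P Q R : ℝ} (hX : X ^ 2 ≤ Q ^ 2) (hP : P ^ 2 ≤ R ^ 2)
    (h : X ^ 2 * R ^ 2 + P ^ 2 * Q ^ 2 ≤ Q ^ 2 * R ^ 2) (c s : ℝ) :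
    c * X + s * P ≤ √(c ^ 2 * Q ^ 2 + s ^ 2 * R ^ 2) := by
  have amgm := two_mul_mul_mul_le_of_sq_le_mul (t := X * P) (sub_nonneg.2 hX) (sub_nonneg.2 hP)
    (by linarith) c s
  exact Real.le_sqrt_of_sq_le (by linarith)

lemma two_mul_two_mul_add_abs_lt {c s : ℝ} (hcs : c ^ 2 + s ^ 2 = 1) :
    2 * (2 * c + |s|) < √8 * (1 + c) := by
  have hs : |s| ^ 2 = 1 - c ^ 2 := by rw [sq_abs]; linarith
  have hc : -1 ≤ c := neg_le_of_abs_le ((sq_le_one_iff_abs_le_one c).1 (by linarith [sq_nonneg s]))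
  calc 2 * (2 * c + |s|) < 14 / 5 * (1 + c) := by
        linarith [sq_nonneg (c - 3 / 5), sq_nonneg (|s| - 1), abs_nonneg s]
    _ ≤ √8 * (1 + c) :=
        mul_le_mul_of_nonneg_right (Real.le_sqrt_of_sq_le (by norm_num)) (by linarith)

end ScalarInequalities

section InnerProductGeometry

open RealInnerProductSpace

variable {E : Type*} [NormedAddCommGroup E] [InnerProductSpace ℝ E]

lemma real_inner_sq_le (x y : E) : ⟪x, y⟫ ^ 2 ≤ ‖x‖ ^ 2 * ‖y‖ ^ 2 := by
  rw [← sq_abs, ← mul_pow]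
  gcongr
  exact abs_real_inner_le_norm x y

-- Bessel's inequality for the pair `r, q`, multiplied by `‖r‖² ‖q‖²` so that neither need be
-- nonzero. It is Cauchy–Schwarz for `b` against the rescaled projection of `b` to their span.
lemma inner_sq_mul_add_inner_sq_mul_le (b : E) {r q : E} (h : ⟪r, q⟫ = 0) :
    ⟪b, r⟫ ^ 2 * ‖q‖ ^ 2 + ⟪b, q⟫ ^ 2 * ‖r‖ ^ 2 ≤ ‖b‖ ^ 2 * ‖r‖ ^ 2 * ‖q‖ ^ 2 := by
  set T := ⟪b, r⟫ ^ 2 * ‖q‖ ^ 2 + ⟪b, q⟫ ^ 2 * ‖r‖ ^ 2 with hT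
  let p : E := (⟪b, r⟫ * ‖q‖ ^ 2) • r + (⟪b, q⟫ * ‖r‖ ^ 2) • q
  have inner_p : ⟪b, p⟫ = T := by
    simp only [p, inner_add_right, real_inner_smul_right, hT]
    ring
  have norm_p : ‖p‖ ^ 2 = ‖r‖ ^ 2 * ‖q‖ ^ 2 * T := by
    simp only [p, norm_add_sq_real, norm_smul, real_inner_smul_left, real_inner_smul_right, h,
      mul_pow, Real.norm_eq_abs, sq_abs, hT]
    ring
  have hT₀ : 0 ≤ T := by positivity
  rcases hT₀.eq_or_lt with hT₀ | hT₀
  · rw [← hT₀]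
    positivity
  · refine le_of_mul_le_mul_right ?_ hT₀
    have cauchy_schwarz := real_inner_sq_le b p
    rw [inner_p, norm_p] at cauchy_schwarz
    linarith

/-- The length kept by the Bloch vector `r` after an unbiased, minimally disturbing measurement
with Bloch vector `b`: the component along `b` survives, the orthogonal one shrinks by
`√(1 - ‖b‖²)`. The radicand is nonnegative when `‖b‖ ≤ 1`. -/
def disturbedNorm (b r : E) : ℝ := √((1 - ‖b‖ ^ 2) * ‖r‖ ^ 2 + ⟪b, r⟫ ^ 2)

lemma disturbedNorm_le_norm (b r : E) : disturbedNorm b r ≤ ‖r‖ :=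
  Real.sqrt_le_iff.2 ⟨norm_nonneg r, by linarith [real_inner_sq_le b r]⟩

lemma mul_disturbedNorm_add_mul_inner_le {b r q : E} (hb : ‖b‖ ≤ 1) (h : ⟪r, q⟫ = 0) (c s : ℝ) :
    c * disturbedNorm b q + s * ⟪b, r⟫ ≤ √(c ^ 2 * ‖q‖ ^ 2 + s ^ 2 * ‖r‖ ^ 2) := by
  have hb' : ‖b‖ ^ 2 ≤ 1 := pow_le_one₀ (norm_nonneg b) hb
  have inner_sq : ⟪b, r⟫ ^ 2 ≤ ‖r‖ ^ 2 :=
    (real_inner_sq_le b r).trans (mul_le_of_le_one_left (sq_nonneg _) hb')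
  have disturbed_sq : disturbedNorm b q ^ 2 = (1 - ‖b‖ ^ 2) * ‖q‖ ^ 2 + ⟪b, q⟫ ^ 2 :=
    Real.sq_sqrt (add_nonneg (mul_nonneg (by linarith) (sq_nonneg _)) (sq_nonneg _))
  refine mul_add_mul_le_sqrt ?_ inner_sq ?_ c s
  · exact pow_le_pow_left₀ (Real.sqrt_nonneg _) (disturbedNorm_le_norm b q) 2
  · rw [disturbed_sq]
    linarith [inner_sq_mul_add_inner_sq_mul_le b h]

variable [Nontrivial E]

lemma exists_norm_eq_one_inner_eq_norm (F : E) : ∃ f : E, ‖f‖ = 1 ∧ ⟪F, f⟫ = ‖F‖ := by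
  rcases eq_or_ne F 0 with rfl | hF
  · obtain ⟨f, hf⟩ := exists_norm_eq E zero_le_one
    exact ⟨f, hf, by simp⟩
  · have hF' : ‖F‖ ≠ 0 := norm_ne_zero_iff.2 hF
    refine ⟨‖F‖⁻¹ • F, norm_smul_inv_norm hF, ?_⟩
    rw [real_inner_smul_right, real_inner_self_eq_norm_sq]
    field_simp

lemma norm_eq_one_of_le_inner_add_inner {F G u v : E} {m : ℝ}
    (le_sphere : ∀ f g : E, ‖f‖ = 1 → ‖g‖ = 1 → ⟪F, f⟫ + ⟪G, g⟫ ≤ m)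
    (lt_diag : ∀ w : E, ‖w‖ = 1 → ⟪F, w⟫ + ⟪G, w⟫ < m)
    (hu : ‖u‖ ≤ 1) (hv : ‖v‖ ≤ 1) (h : m ≤ ⟪F, u⟫ + ⟪G, v⟫) : ‖u‖ = 1 := by
  obtain ⟨f, hf, hFf⟩ := exists_norm_eq_one_inner_eq_norm F
  obtain ⟨g, hg, hGg⟩ := exists_norm_eq_one_inner_eq_norm G
  have le_m : ‖F‖ + ‖G‖ ≤ m := hFf ▸ hGg ▸ le_sphere f g hf hg
  have hFu : ⟪F, u⟫ ≤ ‖F‖ * ‖u‖ := real_inner_le_norm F u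
  have hGv : ⟪G, v⟫ ≤ ‖G‖ :=
    (real_inner_le_norm G v).trans (mul_le_of_le_one_right (norm_nonneg G) hv)
  have F_ne_zero : F ≠ 0 := by
    rintro rfl
    have := lt_diag g hg
    simp only [inner_zero_left] at this h
    linarith
  exact hu.antisymm (le_of_mul_le_mul_left (by linarith) (norm_pos_iff.2 F_ne_zero))

end InnerProductGeometry

section Tradeoff

open RealInnerProductSpace

variable {E : Type*} [NormedAddCommGroup E] [InnerProductSpace ℝ E]

/-- The pair `u + v`, `u - v` of diagonals of a parallelogram, indexed by a bit. With
`u = r₀₀ - r₁₁` and `v = r₀₁ - r₁₀` its entry at `y` is the signed sum `∑ₓ (-1)^(x_y) rₓ`. -/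
def sumDiff (u v : E) (y : Bool) : E := if y then u - v else u + v

lemma norm_sumDiff_sq_add (u v : E) :
    ‖sumDiff u v false‖ ^ 2 + ‖sumDiff u v true‖ ^ 2 = 2 * (‖u‖ ^ 2 + ‖v‖ ^ 2) := by
  simpa only [sumDiff, if_true, Bool.false_eq_true, if_false, sq]
    using parallelogram_law_with_norm ℝ u v

lemma inner_sumDiff_eq_zero {u v : E} (h : ‖u‖ = ‖v‖) :
    ⟪sumDiff u v false, sumDiff u v true⟫ = 0 :=
  (real_inner_add_sub_eq_zero_iff u v).2 h

/-- Bob's correlation with the directions `r y` in which Alice encodes her bits, `b y` being the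
Bloch vector of his observable. -/
def bobScore (b r : Bool → E) : ℝ := ∑ y, ⟪b y, r y⟫

/-- Charlie's correlation with the directions `r z` in which Alice encodes her bits, `a y z` being
the Bloch vector of his observable pulled back through Bob's instrument for setting `y`. -/
def charlieScore (a : Bool → Bool → E) (r : Bool → E) : ℝ := ∑ y, ∑ z, ⟪a y z, r z⟫

lemma bobScore_sumDiff_sq_le {b : Bool → E} (hb : ∀ y, ‖b y‖ ≤ 1) {u v : E}
    (hu : ‖u‖ ≤ 1) (hv : ‖v‖ ≤ 1) : bobScore b (sumDiff u v) ^ 2 ≤ 8 := by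
  set r := sumDiff u v with hr
  have abs_inner_le (y : Bool) : |⟪b y, r y⟫| ≤ ‖r y‖ :=
    (abs_real_inner_le_norm _ _).trans (mul_le_of_le_one_left (norm_nonneg _) (hb y))
  have hu' : ‖u‖ ^ 2 ≤ 1 := pow_le_one₀ (norm_nonneg u) hu
  have hv' : ‖v‖ ^ 2 ≤ 1 := pow_le_one₀ (norm_nonneg v) hv
  calc bobScore b r ^ 2 ≤ (‖r false‖ + ‖r true‖) ^ 2 := by
        refine sq_le_sq' ?_ ?_ <;> rw [bobScore, Fintype.sum_bool] <;>
          linarith [abs_le.1 (abs_inner_le false), abs_le.1 (abs_inner_le true)]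
    _ ≤ 2 * (‖r false‖ ^ 2 + ‖r true‖ ^ 2) := add_sq_le
    _ ≤ 8 := by rw [hr, norm_sumDiff_sq_add]; linarith

section WeightedScore

variable {a : Bool → Bool → E} {b : Bool → E} {c s : ℝ}

lemma exists_weightedScore_sumDiff_eq (a : Bool → Bool → E) (b : Bool → E) (c s : ℝ) :
    ∃ F G : E, ∀ u v : E,
      c * charlieScore a (sumDiff u v) + s * bobScore b (sumDiff u v) = ⟪F, u⟫ + ⟪G, v⟫ := by
  let g (z : Bool) : E := c • ∑ y, a y z + s • b z
  refine ⟨g false + g true, g false - g true, fun u v => ?_⟩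
  simp only [g, charlieScore, bobScore, sumDiff, Fintype.sum_bool, inner_add_left, inner_sub_left,
    inner_add_right, inner_sub_right, real_inner_smul_left, if_true, Bool.false_eq_true, if_false]
  ring

lemma weightedScore_le_add_sqrt (ha : ∀ y z r, ⟪a y z, r⟫ ≤ disturbedNorm (b y) r)
    (hb : ∀ y, ‖b y‖ ≤ 1) (hc : 0 ≤ c) {r : Bool → E} (hr : ⟪r false, r true⟫ = 0) :
    c * charlieScore a r + s * bobScore b r ≤ c * (‖r false‖ + ‖r true‖) +
      (√(c ^ 2 * ‖r true‖ ^ 2 + s ^ 2 * ‖r false‖ ^ 2) +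
        √(c ^ 2 * ‖r false‖ ^ 2 + s ^ 2 * ‖r true‖ ^ 2)) := by
  have same (y : Bool) : c * ⟪a y y, r y⟫ ≤ c * ‖r y‖ :=
    mul_le_mul_of_nonneg_left ((ha y y _).trans (disturbedNorm_le_norm _ _)) hc
  have cross (y z : Bool) (h : ⟪r y, r z⟫ = 0) :
      c * ⟪a y z, r z⟫ + s * ⟪b y, r y⟫ ≤ √(c ^ 2 * ‖r z‖ ^ 2 + s ^ 2 * ‖r y‖ ^ 2) :=
    (add_le_add_left (mul_le_mul_of_nonneg_left (ha y z _) hc) _).trans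
      (mul_disturbedNorm_add_mul_inner_le (hb y) h c s)
  simp only [charlieScore, bobScore, Fintype.sum_bool]
  linarith [same false, same true, cross false true hr,
    cross true false (by rw [real_inner_comm, hr])]

lemma weightedScore_le (ha : ∀ y z r, ⟪a y z, r⟫ ≤ disturbedNorm (b y) r)
    (hb : ∀ y, ‖b y‖ ≤ 1) (hc : 0 ≤ c) (hcs : c ^ 2 + s ^ 2 = 1) {r : Bool → E}
    (hr : ⟪r false, r true⟫ = 0) :
    c * charlieScore a r + s * bobScore b r ≤
      √(2 * (‖r false‖ ^ 2 + ‖r true‖ ^ 2)) * (1 + c) := by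
  have lengths := mul_le_mul_of_nonneg_left (add_le_sqrt_two_mul_add_sq ‖r false‖ ‖r true‖) hc
  have radicals := add_le_sqrt_two_mul_add_sq (√(c ^ 2 * ‖r true‖ ^ 2 + s ^ 2 * ‖r false‖ ^ 2))
    (√(c ^ 2 * ‖r false‖ ^ 2 + s ^ 2 * ‖r true‖ ^ 2))
  have radicands : c ^ 2 * ‖r true‖ ^ 2 + s ^ 2 * ‖r false‖ ^ 2 +
      (c ^ 2 * ‖r false‖ ^ 2 + s ^ 2 * ‖r true‖ ^ 2) = ‖r false‖ ^ 2 + ‖r true‖ ^ 2 := by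
    linear_combination (‖r false‖ ^ 2 + ‖r true‖ ^ 2) * hcs
  rw [Real.sq_sqrt (by positivity), Real.sq_sqrt (by positivity), radicands] at radicals
  linarith [weightedScore_le_add_sqrt (s := s) ha hb hc hr]

lemma weightedScore_sumDiff_le (ha : ∀ y z r, ⟪a y z, r⟫ ≤ disturbedNorm (b y) r)
    (hb : ∀ y, ‖b y‖ ≤ 1) (hc : 0 ≤ c) (hcs : c ^ 2 + s ^ 2 = 1) {u v : E}
    (hu : ‖u‖ = 1) (hv : ‖v‖ = 1) :
    c * charlieScore a (sumDiff u v) + s * bobScore b (sumDiff u v) ≤ √8 * (1 + c) := by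
  have h := weightedScore_le ha hb hc hcs (inner_sumDiff_eq_zero (hu.trans hv.symm))
  rwa [norm_sumDiff_sq_add, hu, hv, show (2 * (2 * (1 ^ 2 + 1 ^ 2)) : ℝ) = 8 by norm_num] at h

lemma weightedScore_sumDiff_self_lt (ha : ∀ y z r, ⟪a y z, r⟫ ≤ disturbedNorm (b y) r)
    (hb : ∀ y, ‖b y‖ ≤ 1) (hc : 0 ≤ c) (hcs : c ^ 2 + s ^ 2 = 1) {w : E} (hw : ‖w‖ = 1) :
    c * charlieScore a (sumDiff w w) + s * bobScore b (sumDiff w w) < √8 * (1 + c) := by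
  have norm_false : ‖sumDiff w w false‖ = 2 := by
    simp [sumDiff, ← two_smul ℝ w, norm_smul, hw]
  have norm_true : ‖sumDiff w w true‖ = 0 := by simp [sumDiff]
  have h := weightedScore_le_add_sqrt (s := s) ha hb hc (inner_sumDiff_eq_zero (rfl : ‖w‖ = ‖w‖))
  rw [norm_false, norm_true] at h
  simp only [ne_eq, OfNat.ofNat_ne_zero, not_false_eq_true, zero_pow, mul_zero, zero_add, add_zero,
    ← mul_pow, Real.sqrt_sq_eq_abs, abs_mul, abs_of_nonneg hc, abs_two] at h
  linarith [two_mul_two_mul_add_abs_lt hcs]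

lemma norm_eq_one_of_le_weightedScore [Nontrivial E]
    (ha : ∀ y z r, ⟪a y z, r⟫ ≤ disturbedNorm (b y) r)
    (hb : ∀ y, ‖b y‖ ≤ 1) (hc : 0 ≤ c) (hcs : c ^ 2 + s ^ 2 = 1) {u v : E}
    (hu : ‖u‖ ≤ 1) (hv : ‖v‖ ≤ 1)
    (h : √8 * (1 + c) ≤ c * charlieScore a (sumDiff u v) + s * bobScore b (sumDiff u v)) :
    ‖u‖ = 1 ∧ ‖v‖ = 1 := by
  obtain ⟨F, G, score_eq⟩ := exists_weightedScore_sumDiff_eq a b c s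
  have le_sphere (f g : E) (hf : ‖f‖ = 1) (hg : ‖g‖ = 1) : ⟪F, f⟫ + ⟪G, g⟫ ≤ √8 * (1 + c) :=
    score_eq f g ▸ weightedScore_sumDiff_le ha hb hc hcs hf hg
  have lt_diag (w : E) (hw : ‖w‖ = 1) : ⟪F, w⟫ + ⟪G, w⟫ < √8 * (1 + c) :=
    score_eq w w ▸ weightedScore_sumDiff_self_lt ha hb hc hcs hw
  rw [score_eq] at h
  refine ⟨norm_eq_one_of_le_inner_add_inner le_sphere lt_diag hu hv h,
    norm_eq_one_of_le_inner_add_inner (F := G) (G := F) (m := √8 * (1 + c))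
      (fun f g hf hg => ?_) (fun w hw => ?_) hv hu ?_⟩
  · exact add_comm ⟪F, g⟫ ⟪G, f⟫ ▸ le_sphere g f hg hf
  · exact add_comm ⟪F, w⟫ ⟪G, w⟫ ▸ lt_diag w hw
  · exact add_comm ⟪F, u⟫ ⟪G, v⟫ ▸ h

end WeightedScore

-- The weights `(c, s)` are those of the supporting line of the curve `X = √8 + √(8 - Y²)` at the
-- given point.
lemma norm_eq_one_of_charlieScore_eq [Nontrivial E] {a : Bool → Bool → E} {b : Bool → E}
    (ha : ∀ y z r, ⟪a y z, r⟫ ≤ disturbedNorm (b y) r) (hb : ∀ y, ‖b y‖ ≤ 1) {u v : E}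
    (hu : ‖u‖ ≤ 1) (hv : ‖v‖ ≤ 1)
    (h : charlieScore a (sumDiff u v) = √8 + √(8 - bobScore b (sumDiff u v) ^ 2)) :
    ‖u‖ = 1 ∧ ‖v‖ = 1 := by
  have bob_sq_le : bobScore b (sumDiff u v) ^ 2 ≤ 8 := bobScore_sumDiff_sq_le hb hu hv
  set Y := bobScore b (sumDiff u v)
  have sq_sqrt_eight : √8 ^ 2 = 8 := Real.sq_sqrt (by norm_num)
  have sq_sqrt_sub : √(8 - Y ^ 2) ^ 2 = 8 - Y ^ 2 := Real.sq_sqrt (sub_nonneg.2 bob_sq_le)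
  refine norm_eq_one_of_le_weightedScore (c := √(8 - Y ^ 2) / √8) (s := Y / √8) ha hb
    (by positivity) ?_ hu hv (le_of_eq ?_)
  · rw [div_pow, div_pow, sq_sqrt_sub, sq_sqrt_eight]
    ring
  · rw [h]
    field_simp
    linear_combination sq_sqrt_eight - sq_sqrt_sub

end Tradeoff

section Bloch

open RealInnerProductSpace

/-- The coefficient `t` of the identity in `A = t • 1 + r · σ`. -/
def halfTrace : Matrix (Fin 2) (Fin 2) ℂ →ₗ[ℝ] ℝ where
  toFun A := A.trace.re / 2
  map_add' A B := by simp [add_div]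
  map_smul' t A := by simp [mul_div_assoc]

/-- The Bloch vector `r` in `A = t • 1 + r · σ`, without the factor `2` that is customary for
states, so that a pure state has a Bloch vector of length `1 / 2`. -/
def blochVec : Matrix (Fin 2) (Fin 2) ℂ →ₗ[ℝ] EuclideanSpace ℝ (Fin 3) where
  toFun A := !₂[(A 1 0).re, (A 1 0).im, ((A 0 0).re - (A 1 1).re) / 2]
  map_add' A B := by ext i; fin_cases i <;> simp [add_sub_add_comm, add_div]
  map_smul' t A := by ext i; fin_cases i <;> simp [← mul_sub, mul_div_assoc]

/-- The matrix `r · σ`, where `σ` is the vector of Pauli matrices. -/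
def pauliDot (r : EuclideanSpace ℝ (Fin 3)) : Matrix (Fin 2) (Fin 2) ℂ :=
  !![(r 2 : ℂ), r 0 - r 1 * Complex.I; r 0 + r 1 * Complex.I, -(r 2 : ℂ)]

lemma isHermitian_pauliDot (r : EuclideanSpace ℝ (Fin 3)) : (pauliDot r).IsHermitian := by
  ext i j
  fin_cases i <;> fin_cases j <;> simp [pauliDot, Complex.ext_iff]

lemma halfTrace_pauliDot (r : EuclideanSpace ℝ (Fin 3)) : halfTrace (pauliDot r) = 0 := by
  simp [halfTrace, pauliDot, Matrix.trace_fin_two]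

lemma blochVec_pauliDot (r : EuclideanSpace ℝ (Fin 3)) : blochVec (pauliDot r) = r := by
  ext i
  fin_cases i <;> simp [blochVec, pauliDot]

lemma halfTrace_one : halfTrace 1 = 1 := by simp [halfTrace]

lemma blochVec_one : blochVec 1 = 0 := by
  ext i
  fin_cases i <;> simp [blochVec]

lemma re_trace_eq_two_mul_halfTrace (A : Matrix (Fin 2) (Fin 2) ℂ) :
    A.trace.re = 2 * halfTrace A := by
  simp only [halfTrace, LinearMap.coe_mk, AddHom.coe_mk]
  ring

lemma halfTrace_eq_half {A : Matrix (Fin 2) (Fin 2) ℂ} (h : A.trace = 1) :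
    halfTrace A = 1 / 2 := by
  simp [halfTrace, h]

lemma eq_halfTrace_smul_one_add_pauliDot {A : Matrix (Fin 2) (Fin 2) ℂ} (hA : A.IsHermitian) :
    A = (halfTrace A : ℂ) • 1 + pauliDot (blochVec A) := by
  have h₀₀ : (A 0 0).im = 0 := Complex.conj_eq_iff_im.1 (hA.apply 0 0)
  have h₁₁ : (A 1 1).im = 0 := Complex.conj_eq_iff_im.1 (hA.apply 1 1)
  have h₀₁ : A 0 1 = star (A 1 0) := (hA.apply 0 1).symm
  ext i j
  fin_cases i <;> fin_cases j <;>
    simp [halfTrace, blochVec, pauliDot, Matrix.trace_fin_two, Complex.ext_iff, h₀₀, h₁₁, h₀₁] <;>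
    ring

lemma re_trace_mul_eq {A B : Matrix (Fin 2) (Fin 2) ℂ} (hA : A.IsHermitian)
    (hB : B.IsHermitian) :
    (A * B).trace.re = 2 * (halfTrace A * halfTrace B + ⟪blochVec A, blochVec B⟫) := by
  conv_lhs => rw [eq_halfTrace_smul_one_add_pauliDot hA, eq_halfTrace_smul_one_add_pauliDot hB]
  simp only [Complex.coe_smul, pauliDot, Fin.isValue, trace_fin_two, Matrix.mul_apply,
    Matrix.add_apply, Matrix.smul_apply, Complex.real_smul, of_apply, cons_val', cons_val_fin_one,
    cons_val_zero, cons_val_one, Fin.sum_univ_two, one_apply_eq, ne_eq, zero_ne_one, one_ne_zero,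
    not_false_eq_true, one_apply_ne, Complex.add_re, Complex.add_im, Complex.sub_re, Complex.sub_im,
    Complex.neg_re, Complex.neg_im, Complex.mul_re, Complex.mul_im, Complex.ofReal_re,
    Complex.ofReal_im, Complex.one_re, Complex.one_im, Complex.zero_re, Complex.zero_im,
    Complex.I_re, Complex.I_im, PiLp.inner_apply, RCLike.inner_apply, Real.ringHom_apply,
    Fin.sum_univ_three]
  ring

lemma det_eq_halfTrace_sq_sub_norm_blochVec_sq {A : Matrix (Fin 2) (Fin 2) ℂ}
    (hA : A.IsHermitian) : A.det = ((halfTrace A ^ 2 - ‖blochVec A‖ ^ 2 : ℝ) : ℂ) := by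
  conv_lhs => rw [eq_halfTrace_smul_one_add_pauliDot hA]
  simp only [Complex.coe_smul, pauliDot, Fin.isValue, det_fin_two, Matrix.add_apply,
    Matrix.smul_apply, one_apply_eq, Complex.real_smul, mul_one, of_apply, cons_val', cons_val_zero,
    cons_val_fin_one, cons_val_one, ne_eq, zero_ne_one, not_false_eq_true, one_apply_ne, smul_zero,
    zero_add, one_ne_zero, EuclideanSpace.norm_sq_eq, Real.norm_eq_abs, sq_abs, Fin.sum_univ_three,
    Complex.ofReal_sub, Complex.ofReal_pow, Complex.ofReal_add]
  linear_combination (blochVec A 1 : ℂ) ^ 2 * Complex.I_sq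

lemma norm_blochVec_le_halfTrace {A : Matrix (Fin 2) (Fin 2) ℂ} (hA : A.PosSemidef) :
    ‖blochVec A‖ ≤ halfTrace A := by
  have trace_nonneg : 0 ≤ A.trace.re := (Complex.le_def.1 hA.trace_nonneg).1
  have det_nonneg := hA.det_nonneg
  rw [det_eq_halfTrace_sq_sub_norm_blochVec_sq hA.1, Complex.zero_le_real] at det_nonneg
  exact le_of_sq_le_sq (sub_nonneg.1 det_nonneg) (div_nonneg trace_nonneg zero_le_two)

lemma mul_self_eq_self_of_trace_eq_one_of_det_eq_zero {R : Type*} [CommRing R]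
    {A : Matrix (Fin 2) (Fin 2) R} (htr : A.trace = 1) (hdet : A.det = 0) : A * A = A := by
  nontriviality R
  have cayley_hamilton := A.aeval_self_charpoly
  simpa [Matrix.charpoly_fin_two, htr, hdet, sq, sub_eq_zero] using cayley_hamilton

lemma mul_self_eq_self_of_norm_blochVec_eq_half {A : Matrix (Fin 2) (Fin 2) ℂ}
    (hA : A.IsHermitian) (htr : A.trace = 1) (h : ‖blochVec A‖ = 1 / 2) : A * A = A := by
  refine mul_self_eq_self_of_trace_eq_one_of_det_eq_zero htr ?_
  rw [det_eq_halfTrace_sq_sub_norm_blochVec_sq hA, halfTrace_eq_half htr, h, sub_self,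
    Complex.ofReal_zero]

lemma norm_blochVec_sub_le_one {A B : Matrix (Fin 2) (Fin 2) ℂ} (hA : A.PosSemidef)
    (hB : B.PosSemidef) (htrA : A.trace = 1) (htrB : B.trace = 1) :
    ‖blochVec A - blochVec B‖ ≤ 1 := by
  linarith [norm_sub_le (blochVec A) (blochVec B), norm_blochVec_le_halfTrace hA,
    norm_blochVec_le_halfTrace hB, halfTrace_eq_half htrA, halfTrace_eq_half htrB]

lemma mul_self_eq_self_of_norm_blochVec_sub_eq_one {A B : Matrix (Fin 2) (Fin 2) ℂ}
    (hA : A.PosSemidef) (hB : B.PosSemidef) (htrA : A.trace = 1) (htrB : B.trace = 1)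
    (h : ‖blochVec A - blochVec B‖ = 1) : A * A = A ∧ B * B = B := by
  have triangle := norm_sub_le (blochVec A) (blochVec B)
  have hA' := halfTrace_eq_half htrA ▸ norm_blochVec_le_halfTrace hA
  have hB' := halfTrace_eq_half htrB ▸ norm_blochVec_le_halfTrace hB
  exact ⟨mul_self_eq_self_of_norm_blochVec_eq_half hA.1 htrA (by linarith),
    mul_self_eq_self_of_norm_blochVec_eq_half hB.1 htrB (by linarith)⟩

end Bloch

section Measurements

variable {ι κ m n : Type*} [Fintype ι]

/-- A positive operator-valued measure with outcomes in `ι`: the effects are positive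
semidefinite and sum to the identity. -/
structure IsPOVM [DecidableEq n] (M : ι → Matrix n n ℂ) : Prop where
  posSemidef : ∀ i, (M i).PosSemidef
  sum_eq_one : ∑ i, M i = 1

/-- The `±1`-valued observable of a binary measurement, with `false` as the outcome `+1`. -/
def observable (M : Bool → Matrix n n ℂ) : Matrix n n ℂ := M false - M true

lemma IsPOVM.isHermitian_observable [DecidableEq n] {M : Bool → Matrix n n ℂ} (hM : IsPOVM M) :
    (observable M).IsHermitian :=
  (hM.posSemidef false).1.sub (hM.posSemidef true).1

variable [Fintype m]

/-- The Heisenberg-picture dual of the channel with Kraus operators `K`, which turns a measurement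
after the channel into one before it. -/
def heisenbergDual (K : ι → Matrix m n ℂ) : Matrix m m ℂ →ₗ[ℂ] Matrix n n ℂ where
  toFun D := ∑ i, (K i)ᴴ * D * K i
  map_add' D D' := by simp only [Matrix.mul_add, Matrix.add_mul, Finset.sum_add_distrib]
  map_smul' t D := by
    simp only [Matrix.mul_smul, Matrix.smul_mul, Finset.smul_sum, RingHom.id_apply]

lemma trace_mul_conjTranspose_mul_mul [Fintype n] (A : Matrix n n ℂ)
    (D : Matrix m m ℂ) (K : Matrix m n ℂ) :
    (A * (Kᴴ * D * K)).trace = (K * A * Kᴴ * D).trace := by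
  rw [← Matrix.mul_assoc, Matrix.trace_mul_comm]
  simp only [Matrix.mul_assoc]

lemma sum_trace_kraus_mul_eq [Fintype n] (K : ι → Matrix m n ℂ) (A : Matrix n n ℂ)
    (D : Matrix m m ℂ) :
    ∑ i, (K i * A * (K i)ᴴ * D).trace = (A * heisenbergDual K D).trace := by
  simp only [heisenbergDual, LinearMap.coe_mk, AddHom.coe_mk, Matrix.mul_sum, Matrix.trace_sum,
    trace_mul_conjTranspose_mul_mul]

lemma heisenbergDual_observable (K : ι → Matrix m n ℂ) (M : Bool → Matrix m m ℂ) :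
    heisenbergDual K (observable M) = observable fun b => heisenbergDual K (M b) :=
  map_sub _ _ _

lemma isPOVM_conjTranspose_mul_self [Finite n] [DecidableEq n] {K : ι → Matrix m n ℂ}
    (hK : ∑ i, (K i)ᴴ * K i = 1) : IsPOVM fun i => (K i)ᴴ * K i :=
  ⟨fun i => Matrix.posSemidef_conjTranspose_mul_self (K i), hK⟩

namespace IsPOVM

lemma heisenbergDual [Fintype κ] [Finite n] [DecidableEq m] [DecidableEq n]
    {K : κ → Matrix m n ℂ} (hK : ∑ i, (K i)ᴴ * K i = 1) {M : ι → Matrix m m ℂ} (hM : IsPOVM M) :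
    IsPOVM fun i => heisenbergDual K (M i) where
  posSemidef i := Matrix.posSemidef_sum _ fun k _ =>
    (hM.posSemidef i).conjTranspose_mul_mul_same (K k)
  sum_eq_one := by
    rw [← map_sum, hM.sum_eq_one]
    simpa [_root_.heisenbergDual] using hK

variable {M : Bool → Matrix (Fin 2) (Fin 2) ℂ}

lemma halfTrace_add (hM : IsPOVM M) : halfTrace (M false) + halfTrace (M true) = 1 := by
  rw [← map_add, add_comm, ← Fintype.sum_bool, hM.sum_eq_one, halfTrace_one]

lemma blochVec_true (hM : IsPOVM M) : blochVec (M true) = -blochVec (M false) := by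
  rw [eq_neg_iff_add_eq_zero, ← map_add, ← Fintype.sum_bool, hM.sum_eq_one, blochVec_one]

lemma blochVec_observable (hM : IsPOVM M) :
    blochVec (observable M) = (2 : ℝ) • blochVec (M false) := by
  rw [observable, map_sub, hM.blochVec_true, sub_neg_eq_add, two_smul]

lemma norm_blochVec_observable_le_one (hM : IsPOVM M) : ‖blochVec (observable M)‖ ≤ 1 := by
  rw [observable, map_sub]
  linarith [norm_sub_le (blochVec (M false)) (blochVec (M true)), hM.halfTrace_add,
    norm_blochVec_le_halfTrace (hM.posSemidef false),
    norm_blochVec_le_halfTrace (hM.posSemidef true)]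

end IsPOVM

end Measurements

section Disturbance

open RealInnerProductSpace

lemma halfTrace_kraus_pauliDot (K : Matrix (Fin 2) (Fin 2) ℂ) (r : EuclideanSpace ℝ (Fin 3)) :
    halfTrace (K * pauliDot r * Kᴴ) = ⟪blochVec (Kᴴ * K), r⟫ := by
  have cyclic : (K * pauliDot r * Kᴴ).trace = (Kᴴ * K * pauliDot r).trace := by
    rw [Matrix.trace_mul_comm, Matrix.mul_assoc]
  have h := re_trace_mul_eq (Matrix.isHermitian_conjTranspose_mul_self K) (isHermitian_pauliDot r)
  rw [← cyclic, re_trace_eq_two_mul_halfTrace, halfTrace_pauliDot, blochVec_pauliDot] at h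
  linarith

-- Multiplicativity of the determinant, read through `det = t² - ‖r‖²`.
lemma norm_blochVec_kraus_pauliDot_sq (K : Matrix (Fin 2) (Fin 2) ℂ)
    (r : EuclideanSpace ℝ (Fin 3)) :
    ‖blochVec (K * pauliDot r * Kᴴ)‖ ^ 2 = (halfTrace (Kᴴ * K) * ‖r‖) ^ 2 -
      (‖blochVec (Kᴴ * K)‖ ^ 2 * ‖r‖ ^ 2 - ⟪blochVec (Kᴴ * K), r⟫ ^ 2) := by
  have det_mul : (K * pauliDot r * Kᴴ).det = (Kᴴ * K).det * (pauliDot r).det := by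
    simp only [Matrix.det_mul]
    ring
  rw [det_eq_halfTrace_sq_sub_norm_blochVec_sq
      (Matrix.isHermitian_mul_mul_conjTranspose K (isHermitian_pauliDot r)),
    det_eq_halfTrace_sq_sub_norm_blochVec_sq (Matrix.isHermitian_conjTranspose_mul_self K),
    det_eq_halfTrace_sq_sub_norm_blochVec_sq (isHermitian_pauliDot r), halfTrace_pauliDot,
    blochVec_pauliDot, halfTrace_kraus_pauliDot, ← Complex.ofReal_mul, Complex.ofReal_inj]
    at det_mul
  linarith

lemma inner_blochVec_conjTranspose_mul_mul (K : Matrix (Fin 2) (Fin 2) ℂ)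
    {D : Matrix (Fin 2) (Fin 2) ℂ} (hD : D.IsHermitian) (r : EuclideanSpace ℝ (Fin 3)) :
    ⟪blochVec (Kᴴ * D * K), r⟫ =
      ⟪blochVec (Kᴴ * K), r⟫ * halfTrace D + ⟪blochVec (K * pauliDot r * Kᴴ), blochVec D⟫ := by
  have heisenberg := re_trace_mul_eq (isHermitian_pauliDot r)
    (Matrix.isHermitian_conjTranspose_mul_mul K hD)
  have schroedinger := re_trace_mul_eq
    (Matrix.isHermitian_mul_mul_conjTranspose K (isHermitian_pauliDot r)) hD
  rw [trace_mul_conjTranspose_mul_mul, schroedinger, halfTrace_pauliDot, blochVec_pauliDot,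
    halfTrace_kraus_pauliDot, real_inner_comm _ r] at heisenberg
  linarith

lemma norm_blochVec_kraus_add_le_disturbedNorm {K : Bool → Matrix (Fin 2) (Fin 2) ℂ}
    (hK : ∑ b, (K b)ᴴ * K b = 1) (r : EuclideanSpace ℝ (Fin 3)) :
    ‖blochVec (K false * pauliDot r * (K false)ᴴ)‖ +
        ‖blochVec (K true * pauliDot r * (K true)ᴴ)‖ ≤
      disturbedNorm (blochVec (observable fun b => (K b)ᴴ * K b)) r := by
  have effects := isPOVM_conjTranspose_mul_self hK
  have halfTrace_nonneg (b : Bool) : 0 ≤ halfTrace ((K b)ᴴ * K b) :=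
    (norm_nonneg _).trans (norm_blochVec_le_halfTrace (effects.posSemidef b))
  have norm_sq_false := norm_blochVec_kraus_pauliDot_sq (K false) r
  have norm_sq_true := norm_blochVec_kraus_pauliDot_sq (K true) r
  rw [effects.blochVec_true, norm_neg, inner_neg_left, neg_sq] at norm_sq_true
  refine (add_le_sqrt_of_sq_eq_sub (mul_nonneg (halfTrace_nonneg false) (norm_nonneg r))
    (mul_nonneg (halfTrace_nonneg true) (norm_nonneg r))
    (sub_nonneg.2 (real_inner_sq_le _ r)) norm_sq_false norm_sq_true).trans_eq ?_
  rw [disturbedNorm, effects.blochVec_observable, ← add_mul, effects.halfTrace_add, norm_smul,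
    real_inner_smul_left, Real.norm_two]
  congr 1
  ring

lemma inner_blochVec_heisenbergDual_le {K : Bool → Matrix (Fin 2) (Fin 2) ℂ}
    (hK : ∑ b, (K b)ᴴ * K b = 1) {D : Matrix (Fin 2) (Fin 2) ℂ} (hD : D.IsHermitian)
    (hD' : ‖blochVec D‖ ≤ 1) (r : EuclideanSpace ℝ (Fin 3)) :
    ⟪blochVec (heisenbergDual K D), r⟫ ≤
      disturbedNorm (blochVec (observable fun b => (K b)ᴴ * K b)) r := by
  have inner_le (b : Bool) : ⟪blochVec (K b * pauliDot r * (K b)ᴴ), blochVec D⟫ ≤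
      ‖blochVec (K b * pauliDot r * (K b)ᴴ)‖ :=
    (real_inner_le_norm _ _).trans (mul_le_of_le_one_right (norm_nonneg _) hD')
  have expand : ⟪blochVec (heisenbergDual K D), r⟫ =
      ⟪blochVec (K false * pauliDot r * (K false)ᴴ), blochVec D⟫ +
        ⟪blochVec (K true * pauliDot r * (K true)ᴴ), blochVec D⟫ := by
    simp only [heisenbergDual, LinearMap.coe_mk, AddHom.coe_mk, Fintype.sum_bool, map_add,
      inner_add_left, inner_blochVec_conjTranspose_mul_mul _ hD,
      (isPOVM_conjTranspose_mul_self hK).blochVec_true, inner_neg_left]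
    ring
  rw [expand]
  exact (add_le_add (inner_le false) (inner_le true)).trans
    (norm_blochVec_kraus_add_le_disturbedNorm hK r)

end Disturbance

section Witnesses

open RealInnerProductSpace

variable {ρ : Bool × Bool → Matrix (Fin 2) (Fin 2) ℂ}

/-- The directions in which Alice's states encode each of her two bits: the entry at `y` is the
Bloch vector of `∑ₓ (-1)^(x_y) ρₓ`. -/
def encodingDirection (ρ : Bool × Bool → Matrix (Fin 2) (Fin 2) ℂ) :
    Bool → EuclideanSpace ℝ (Fin 3) :=
  sumDiff (blochVec (ρ (false, false)) - blochVec (ρ (true, true)))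
    (blochVec (ρ (false, true)) - blochVec (ρ (true, false)))

lemma sum_re_trace_mul_bit_eq (hρ : ∀ x, (ρ x).IsHermitian) (htr : ∀ x, (ρ x).trace = 1)
    {M : Bool → Matrix (Fin 2) (Fin 2) ℂ} (hM : IsPOVM M) (y : Bool) :
    ∑ x, (ρ x * M (bit x y)).trace.re =
      2 + ⟪blochVec (observable M), encodingDirection ρ y⟫ := by
  have trace_eq (x : Bool × Bool) (b : Bool) :
      (ρ x * M b).trace.re = halfTrace (M b) + 2 * ⟪blochVec (M b), blochVec (ρ x)⟫ := by
    rw [re_trace_mul_eq (hρ x) (hM.posSemidef b).1, halfTrace_eq_half (htr x), real_inner_comm]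
    ring
  simp only [trace_eq, hM.blochVec_observable, real_inner_smul_left, Fintype.sum_prod_type,
    Fintype.sum_bool]
  cases y <;>
    simp only [bit, encodingDirection, sumDiff, if_true, if_false, Bool.false_eq_true,
      hM.blochVec_true, inner_neg_left, inner_add_right, inner_sub_right] <;>
    linarith [hM.halfTrace_add]

lemma WAB_eq (hρ : ∀ x, (ρ x).IsHermitian) (htr : ∀ x, (ρ x).trace = 1)
    {K : Bool → Bool → Matrix (Fin 2) (Fin 2) ℂ} (hK : ∀ y, ∑ b, (K y b)ᴴ * K y b = 1) :
    WAB ρ K = 1 / 2 + 1 / 8 * bobScore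
      (fun y => blochVec (observable fun b => (K y b)ᴴ * K y b)) (encodingDirection ρ) := by
  have guess (y : Bool) := sum_re_trace_mul_bit_eq hρ htr (isPOVM_conjTranspose_mul_self (hK y)) y
  rw [WAB, Finset.sum_comm]
  simp only [guess, bobScore, Fintype.sum_bool]
  ring

lemma WAC_eq (hρ : ∀ x, (ρ x).IsHermitian) (htr : ∀ x, (ρ x).trace = 1)
    {K C : Bool → Bool → Matrix (Fin 2) (Fin 2) ℂ} (hK : ∀ y, ∑ b, (K y b)ᴴ * K y b = 1)
    (hC : ∀ z, IsPOVM (C z)) :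
    WAC ρ K C = 1 / 2 + 1 / 16 * charlieScore
      (fun y z => blochVec (heisenbergDual (K y) (observable (C z)))) (encodingDirection ρ) := by
  have guess (y z : Bool) : ∑ x, ∑ b, (K y b * ρ x * (K y b)ᴴ * C z (bit x z)).trace.re =
      2 + ⟪blochVec (heisenbergDual (K y) (observable (C z))), encodingDirection ρ z⟫ := by
    simp only [← Complex.re_sum, sum_trace_kraus_mul_eq, heisenbergDual_observable]
    exact sum_re_trace_mul_bit_eq hρ htr ((hC z).heisenbergDual (hK y)) z
  have reorder (y : Bool) :
      ∑ x, ∑ b, ∑ z, (K y b * ρ x * (K y b)ᴴ * C z (bit x z)).trace.re =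
        ∑ z, ∑ x, ∑ b, (K y b * ρ x * (K y b)ᴴ * C z (bit x z)).trace.re :=
    (Finset.sum_congr rfl fun _ _ => Finset.sum_comm).trans Finset.sum_comm
  rw [WAC, Finset.sum_comm]
  simp only [reorder, guess]
  simp only [charlieScore, Fintype.sum_bool]
  ring

lemma eq_sqrt_eight_add_sqrt_of_witness_eq {X Y α : ℝ} (hY : 1 / 2 + 1 / 8 * Y = α)
    (hX : 1 / 2 + 1 / 16 * X = (4 + √2 + √(16 * α - 16 * α ^ 2 - 2)) / 8) :
    X = √8 + √(8 - Y ^ 2) := by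
  have sqrt_four_mul (t : ℝ) : √(4 * t) = 2 * √t := by
    rw [Real.sqrt_mul zero_le_four, show (4 : ℝ) = 2 ^ 2 by norm_num, Real.sqrt_sq zero_le_two]
  have h₁ : √8 = 2 * √2 := by rw [← sqrt_four_mul]; norm_num
  have h₂ : √(8 - Y ^ 2) = 2 * √(16 * α - 16 * α ^ 2 - 2) := by
    rw [← sqrt_four_mul, ← hY]
    congr 1
    ring
  rw [h₁, h₂]
  linarith

end Witnesses

theorem selftest_states_pure_general
    (ρ : Bool × Bool → Matrix (Fin 2) (Fin 2) ℂ)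
    (K C : Bool → Bool → Matrix (Fin 2) (Fin 2) ℂ)
    (hvalid : ValidStrategy ρ K C) (α : ℝ) (hAB : WAB ρ K = α)
    (hAC : WAC ρ K C = (4 + Real.sqrt 2 + Real.sqrt (16 * α - 16 * α ^ 2 - 2)) / 8) :
    ∀ x : Bool × Bool, ρ x * ρ x = ρ x ∧ (ρ x).trace = 1 := by
  obtain ⟨hρ, hK, hC, hC'⟩ := hvalid
  have psd (x : Bool × Bool) : (ρ x).PosSemidef := (hρ x).1
  have tr (x : Bool × Bool) : (ρ x).trace = 1 := (hρ x).2
  have kraus (y : Bool) : ∑ b, (K y b)ᴴ * K y b = 1 := by rw [Fintype.sum_bool, add_comm, hK]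
  have povm (z : Bool) : IsPOVM (C z) := ⟨hC z, by rw [Fintype.sum_bool, add_comm, hC']⟩
  rw [WAB_eq (fun x => (psd x).1) tr kraus] at hAB
  rw [WAC_eq (fun x => (psd x).1) tr kraus povm] at hAC
  obtain ⟨norm_u, norm_v⟩ := norm_eq_one_of_charlieScore_eq
    (fun y z => inner_blochVec_heisenbergDual_le (kraus y) (povm z).isHermitian_observable
      (povm z).norm_blochVec_observable_le_one)
    (fun y => (isPOVM_conjTranspose_mul_self (kraus y)).norm_blochVec_observable_le_one)
    (norm_blochVec_sub_le_one (psd _) (psd _) (tr _) (tr _))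
    (norm_blochVec_sub_le_one (psd _) (psd _) (tr _) (tr _))
    (eq_sqrt_eight_add_sqrt_of_witness_eq hAB hAC)
  obtain ⟨pure₀₀, pure₁₁⟩ := mul_self_eq_self_of_norm_blochVec_sub_eq_one (psd _) (psd _) (tr _)
    (tr _) norm_u
  obtain ⟨pure₀₁, pure₁₀⟩ := mul_self_eq_self_of_norm_blochVec_sub_eq_one (psd _) (psd _) (tr _)
    (tr _) norm_v
  rintro ⟨_ | _, _ | _⟩
  exacts [⟨pure₀₀, tr _⟩, ⟨pure₀₁, tr _⟩, ⟨pure₁₀, tr _⟩, ⟨pure₁₁, tr _⟩]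

/-- Result 2 (purity of Alice's states): a strategy achieving the optimal
witness pair has all four preparations pure, i.e. rank-one projections. -/
theorem selftest_states_pure
    (ρ : Bool × Bool → Matrix (Fin 2) (Fin 2) ℂ)
    (K C : Bool → Bool → Matrix (Fin 2) (Fin 2) ℂ)
    (hvalid : ValidStrategy ρ K C)
    (α : ℝ) (hα : α ∈ Set.Icc (1 / 2 : ℝ) ((2 + Real.sqrt 2) / 4))
    (hAB : WAB ρ K = α)
    (hAC : WAC ρ K C = (4 + Real.sqrt 2 + Real.sqrt (16 * α - 16 * α ^ 2 - 2)) / 8) :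
    ∀ x : Bool × Bool, ρ x * ρ x = ρ x ∧ (ρ x).trace = 1 := by
  exact selftest_states_pure_general ρ K C hvalid α hAB hAC

end
end
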